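/- arXiv:2512.12954 — 2 statements merged into one kernel-verified Lean document; each statement's English description precedes it below -/
import Mathlib

section
/- Let H be a real Hilbert space, Γ ⊆ (0,∞) a nonempty set, α ∈ (0,1), (T_γ)_{γ∈Γ} a family of α-averaged nonexpansive operators on H with Fix T_γ ≠ ∅ for all γ ∈ Γ, and (Q_{δ←γ})_{δ,γ∈Γ} fixed-point relocators for (T_γ)_{γ∈Γ} with Lipschitz constants (L_{δ←γ})_{δ,γ∈Γ} in [1,∞). Suppose: Assumption A holds; the map (x,γ) ↦ T_γx is continuous on H × Γ; (T_γ)_{γ∈Γ} is uniformly boundedly linearly regular; (γ_n)_{n∈ℕ} ⊆ Γ converges R-linearly to some γ* ∈ Γ; and ∑_{n∈ℕ}(L_{γ_{n+1}←γ_n} − 1) < +∞. Given x₀ ∈ H, define x_{n+1} := Q_{γ_{n+1}←γ_n}(T_{γ_n}x_n) for all n ∈ ℕ. Then there exists x ∈ Fix T_{γ*} such that both (x_n)_{n∈ℕ} and (T_{γ_n}x_n)_{n∈ℕ} converge R-linearly to x. -/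
variable {H : Type*}

/-- The set of fixed points of a single-valued operator. -/
def FixSet (T : H → H) : Set H := {x | T x = x}

/-- `T` is an `α`-averaged nonexpansive operator. -/
def AveragedNE [NormedAddCommGroup H] [InnerProductSpace ℝ H] (α : ℝ) (T : H → H) : Prop :=
  ∀ x y : H, ‖T x - T y‖ ^ 2 + ((1 - α) / α) * ‖(x - T x) - (y - T y)‖ ^ 2 ≤ ‖x - y‖ ^ 2

/-- `(Q δ γ)_{δ,γ ∈ Γ}` is a family of fixed-point relocators for the family of
operators `(T γ)_{γ ∈ Γ}` with Lipschitz constants `(L δ γ)_{δ,γ ∈ Γ}` in `[1,∞)`. -/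
def IsRelocators [NormedAddCommGroup H] (Γ : Set ℝ) (T : ℝ → H → H)
    (Q : ℝ → ℝ → H → H) (L : ℝ → ℝ → ℝ) : Prop :=
  (∀ γ ∈ Γ, ∀ δ ∈ Γ, Set.BijOn (Q δ γ) (FixSet (T γ)) (FixSet (T δ))) ∧
  (∀ γ ∈ Γ, ∀ x ∈ FixSet (T γ), ContinuousOn (fun δ : ℝ => Q δ γ x) Γ) ∧
  (∀ γ ∈ Γ, ∀ δ ∈ Γ, ∀ ε ∈ Γ, ∀ x ∈ FixSet (T γ), Q ε δ (Q δ γ x) = Q ε γ x) ∧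
  (∀ γ ∈ Γ, ∀ δ ∈ Γ, 1 ≤ L δ γ ∧ ∀ x y : H, ‖Q δ γ x - Q δ γ y‖ ≤ L δ γ * ‖x - y‖)

/-- Assumption A: on every bounded subset `S` of `⋃_{γ∈Γ} (Fix T_γ × {γ})`, the
relocators satisfy `‖Q δ γ x − Q γ γ x‖ ≤ L |δ − γ|` for some `L > 0`. -/
def AssumptionA [NormedAddCommGroup H] (Γ : Set ℝ) (T : ℝ → H → H)
    (Q : ℝ → ℝ → H → H) : Prop :=
  ∀ S : Set (H × ℝ), S ⊆ (⋃ γ ∈ Γ, FixSet (T γ) ×ˢ ({γ} : Set ℝ)) →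
    Bornology.IsBounded S →
    ∃ L : ℝ, 0 < L ∧ ∀ δ ∈ Γ, ∀ p ∈ S, ‖Q δ p.2 p.1 - Q p.2 p.2 p.1‖ ≤ L * |δ - p.2|

/-- The family `(T γ)_{γ ∈ Γ}` is uniformly boundedly linearly regular. -/
def UnifBddLinReg [NormedAddCommGroup H] (Γ : Set ℝ) (T : ℝ → H → H) : Prop :=
  ∀ S : Set H, S.Nonempty → Bornology.IsBounded S →
    ∃ κ : ℝ, 0 < κ ∧ ∀ x ∈ S, ∀ γ ∈ Γ,
      Metric.infDist x (FixSet (T γ)) ≤ κ * ‖x - T γ x‖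

/-- A sequence converges `R`-linearly to a point. -/
def RLinearTo {E : Type*} [NormedAddCommGroup E] (x : ℕ → E) (p : E) : Prop :=
  ∃ C : ℝ, 0 ≤ C ∧ ∃ r ∈ Set.Ioo (0 : ℝ) 1, ∀ n : ℕ, ‖x n - p‖ ≤ C * r ^ n

/-!
The distance `d n` from `x n` to `Fix T_{γ n}` contracts: averagedness together with linear
regularity gives `dist (T x) (Fix T) ≤ ρ * dist x (Fix T)` with `ρ < 1`, and relocating costs only
the factor `L_{γ (n+1) ← γ n}`, whose infinite product converges. Hence `d n` decays geometrically.
Choosing fixed points `y n` of `T_{γ n}` almost realising `d n`, Assumption A bounds the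
displacement of `y n` under relocation by a multiple of `|γ (n+1) - γ n|`, so the steps of `x` decay
geometrically too. The relocations of `y n` to `γs` lie in the closed set `Fix T_γs` and, again by
Assumption A, have the same limit as `x`.
-/

open Set Filter Topology Metric Bornology

/-- Domination of a real sequence by a convergent geometric one. `RLinearTo x p` says this about
`‖x n - p‖`, and the notion absorbs the change of ratio when several such bounds are combined. -/
def IsGeometricallyBounded (a : ℕ → ℝ) : Prop :=
  ∃ C : ℝ, 0 ≤ C ∧ ∃ r ∈ Ioo (0 : ℝ) 1, ∀ n, a n ≤ C * r ^ n

namespace IsGeometricallyBounded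

variable {a b : ℕ → ℝ}

theorem mono (hb : IsGeometricallyBounded b) (hab : ∀ n, a n ≤ b n) :
    IsGeometricallyBounded a := by
  obtain ⟨C, hC, r, hr, hbC⟩ := hb
  exact ⟨C, hC, r, hr, fun n => (hab n).trans (hbC n)⟩

theorem add (ha : IsGeometricallyBounded a) (hb : IsGeometricallyBounded b) :
    IsGeometricallyBounded fun n => a n + b n := by
  obtain ⟨C, hC, r, hr, haC⟩ := ha
  obtain ⟨D, hD, s, hs, hbD⟩ := hb
  refine ⟨C + D, add_nonneg hC hD, max r s, ⟨lt_max_of_lt_left hr.1, max_lt hr.2 hs.2⟩,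
    fun n => ?_⟩
  calc a n + b n ≤ C * r ^ n + D * s ^ n := add_le_add (haC n) (hbD n)
    _ ≤ C * max r s ^ n + D * max r s ^ n := by
      gcongr
      · exact hr.1.le
      · exact le_max_left r s
      · exact hs.1.le
      · exact le_max_right r s
    _ = (C + D) * max r s ^ n := by ring

theorem const_mul {c : ℝ} (hc : 0 ≤ c) (ha : IsGeometricallyBounded a) :
    IsGeometricallyBounded fun n => c * a n := by
  obtain ⟨C, hC, r, hr, haC⟩ := ha
  refine ⟨c * C, mul_nonneg hc hC, r, hr, fun n => ?_⟩
  rw [mul_assoc]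
  exact mul_le_mul_of_nonneg_left (haC n) hc

theorem comp_succ (ha : IsGeometricallyBounded a) :
    IsGeometricallyBounded fun n => a (n + 1) := by
  obtain ⟨C, hC, r, hr, haC⟩ := ha
  refine ⟨C, hC, r, hr, fun n => (haC (n + 1)).trans ?_⟩
  exact mul_le_mul_of_nonneg_left (pow_le_pow_of_le_one hr.1.le hr.2.le n.le_succ) hC

theorem tendsto_zero (ha : IsGeometricallyBounded a) (ha0 : ∀ n, 0 ≤ a n) :
    Tendsto a atTop (𝓝 0) := by
  obtain ⟨C, -, r, hr, haC⟩ := ha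
  refine squeeze_zero ha0 haC ?_
  simpa only [mul_zero] using (tendsto_pow_atTop_nhds_zero_of_lt_one hr.1.le hr.2).const_mul C

theorem isBounded_range_right {X : Type*} [PseudoMetricSpace X] {x y : ℕ → X}
    (hxy : IsGeometricallyBounded fun n => dist (x n) (y n)) (hx : IsBounded (range x)) :
    IsBounded (range y) := by
  obtain ⟨R, hR⟩ := (isBounded_range_of_tendsto _
    (hxy.tendsto_zero fun _ => dist_nonneg)).bddAbove
  refine (hx.cthickening (δ := R)).subset ?_
  rintro _ ⟨n, rfl⟩
  refine mem_cthickening_of_dist_le (y n) (x n) R _ ⟨n, rfl⟩ ?_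
  rw [dist_comm]
  exact hR ⟨n, rfl⟩

theorem exists_seq_mem {X : Type*} [PseudoMetricSpace X] {x : ℕ → X} {s : ℕ → Set X}
    (hs : ∀ n, (s n).Nonempty) (h : IsGeometricallyBounded fun n => infDist (x n) (s n)) :
    ∃ y : ℕ → X, (∀ n, y n ∈ s n) ∧ IsGeometricallyBounded fun n => dist (x n) (y n) := by
  obtain ⟨C, hC, r, hr, hbound⟩ := h
  have near : ∀ n, ∃ y ∈ s n, dist (x n) y < (C + 1) * r ^ n := fun n => by
    refine (infDist_lt_iff (hs n)).1 ((hbound n).trans_lt ?_)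
    have := pow_pos hr.1 n
    gcongr
    exact lt_add_one C
  choose y hys hxy using near
  exact ⟨y, hys, C + 1, by positivity, r, hr, fun n => (hxy n).le⟩

end IsGeometricallyBounded

theorem le_exp_tsum_mul_pow {u ℓ : ℕ → ℝ} {ρ : ℝ} (hρ : 0 ≤ ρ) (hu : 0 ≤ u 0)
    (hℓ : ∀ n, 1 ≤ ℓ n) (hsum : Summable fun n => ℓ n - 1)
    (hstep : ∀ n, u (n + 1) ≤ ℓ n * (ρ * u n)) (n : ℕ) :
    u n ≤ Real.exp (∑' i, (ℓ i - 1)) * u 0 * ρ ^ n := by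
  have hiter : u n ≤ (∏ i ∈ Finset.range n, ℓ i) * u 0 * ρ ^ n := by
    induction n with
    | zero => simp
    | succ k ih =>
      have hℓk : 0 ≤ ℓ k := zero_le_one.trans (hℓ k)
      calc u (k + 1) ≤ ℓ k * (ρ * u k) := hstep k
        _ ≤ ℓ k * (ρ * ((∏ i ∈ Finset.range k, ℓ i) * u 0 * ρ ^ k)) := by gcongr
        _ = (∏ i ∈ Finset.range (k + 1), ℓ i) * u 0 * ρ ^ (k + 1) := by
          rw [Finset.prod_range_succ]; ring
  have hℓ' : ∀ i, 0 ≤ ℓ i - 1 := fun i => sub_nonneg.2 (hℓ i)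
  have hprod : ∏ i ∈ Finset.range n, ℓ i ≤ Real.exp (∑' i, (ℓ i - 1)) := by
    calc ∏ i ∈ Finset.range n, ℓ i = ∏ i ∈ Finset.range n, (1 + (ℓ i - 1)) := by
          simp only [add_sub_cancel]
      _ ≤ Real.exp (∑ i ∈ Finset.range n, (ℓ i - 1)) := Real.prod_one_add_le_exp_sum _ hℓ'
      _ ≤ Real.exp (∑' i, (ℓ i - 1)) :=
          Real.exp_le_exp.2 (hsum.sum_le_tsum _ fun i _ => hℓ' i)
  exact hiter.trans (by gcongr)

section RLinearTo

variable {E : Type*} [NormedAddCommGroup E] {x y : ℕ → E} {p : E}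

theorem rLinearTo_iff_dist :
    RLinearTo x p ↔ IsGeometricallyBounded fun n => dist (x n) p := by
  simp only [dist_eq_norm]
  rfl

theorem RLinearTo.tendsto (hx : RLinearTo x p) : Tendsto x atTop (𝓝 p) :=
  tendsto_iff_dist_tendsto_zero.2 <|
    (rLinearTo_iff_dist.1 hx).tendsto_zero fun _ => dist_nonneg

theorem RLinearTo.of_dist (hx : RLinearTo x p)
    (hxy : IsGeometricallyBounded fun n => dist (x n) (y n)) : RLinearTo y p :=
  rLinearTo_iff_dist.2 <|
    (hxy.add (rLinearTo_iff_dist.1 hx)).mono fun n => dist_triangle_left (y n) p (x n)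

theorem RLinearTo.isGeometricallyBounded_dist_succ (hx : RLinearTo x p) :
    IsGeometricallyBounded fun n => dist (x (n + 1)) (x n) := by
  have hxp := rLinearTo_iff_dist.1 hx
  exact (hxp.comp_succ.add hxp).mono fun n => dist_triangle_right (x (n + 1)) (x n) p

theorem exists_rLinearTo_of_dist_succ [CompleteSpace E]
    (hx : IsGeometricallyBounded fun n => dist (x n) (x (n + 1))) : ∃ p, RLinearTo x p := by
  obtain ⟨C, hC, r, hr, hstep⟩ := hx
  obtain ⟨p, hp⟩ := cauchySeq_tendsto_of_complete (cauchySeq_of_le_geometric r C hr.2 hstep)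
  refine ⟨p, rLinearTo_iff_dist.2
    ⟨C / (1 - r), div_nonneg hC (sub_nonneg.2 hr.2.le), r, hr, fun n => ?_⟩⟩
  rw [div_mul_eq_mul_div]
  exact dist_le_of_le_geometric_of_tendsto r C hr.2 hstep hp n

end RLinearTo

/-- `T` is strongly quasi-nonexpansive with constant `c`: the averagedness inequality, with `c` in
place of `(1 - α) / α`, tested only against fixed points of `T`. -/
def StronglyQuasiNE [NormedAddCommGroup H] (c : ℝ) (T : H → H) : Prop :=
  ∀ x, ∀ y ∈ FixSet T, ‖T x - y‖ ^ 2 + c * ‖x - T x‖ ^ 2 ≤ ‖x - y‖ ^ 2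

theorem AveragedNE.stronglyQuasiNE [NormedAddCommGroup H] [InnerProductSpace ℝ H] {α : ℝ}
    {T : H → H} (hT : AveragedNE α T) : StronglyQuasiNE ((1 - α) / α) T := by
  intro x y hy
  have hTy : T y = y := hy
  simpa only [hTy, sub_self, sub_zero] using hT x y

namespace StronglyQuasiNE

variable [NormedAddCommGroup H] {c κ : ℝ} {T : H → H} {x y : H}

theorem dist_le (hT : StronglyQuasiNE c T) (hc : 0 ≤ c) (hy : y ∈ FixSet T) :
    dist (T x) y ≤ dist x y := by
  rw [dist_eq_norm, dist_eq_norm]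
  refine le_of_sq_le_sq ?_ (norm_nonneg _)
  exact (le_add_of_nonneg_right (by positivity)).trans (hT x y hy)

theorem isClosed_fixSet (hT : StronglyQuasiNE c T) (hc : 0 ≤ c) : IsClosed (FixSet T) := by
  refine IsSeqClosed.isClosed fun y p hy hyp => ?_
  have hTp : Tendsto y atTop (𝓝 (T p)) := by
    rw [tendsto_iff_dist_tendsto_zero] at hyp ⊢
    refine squeeze_zero (fun _ => dist_nonneg) (fun n => ?_) hyp
    simpa only [dist_comm (y n)] using hT.dist_le hc (hy n)
  exact tendsto_nhds_unique hTp hyp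

theorem infDist_sq_add_le (hT : StronglyQuasiNE c T) (hne : (FixSet T).Nonempty) :
    infDist (T x) (FixSet T) ^ 2 + c * ‖x - T x‖ ^ 2 ≤ infDist x (FixSet T) ^ 2 := by
  refine (Real.sqrt_le_left infDist_nonneg).1 ((le_infDist hne).2 fun y hy => ?_)
  refine Real.sqrt_le_iff.2 ⟨dist_nonneg, ?_⟩
  calc infDist (T x) (FixSet T) ^ 2 + c * ‖x - T x‖ ^ 2
      ≤ dist (T x) y ^ 2 + c * ‖x - T x‖ ^ 2 := by
        gcongr
        · exact infDist_nonneg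
        · exact infDist_le_dist_of_mem hy
    _ ≤ dist x y ^ 2 := by
        rw [dist_eq_norm, dist_eq_norm]
        exact hT x y hy

theorem infDist_le_sqrt_mul (hT : StronglyQuasiNE c T) (hc : 0 < c) (hne : (FixSet T).Nonempty)
    (hreg : infDist x (FixSet T) ≤ κ * ‖x - T x‖) :
    infDist (T x) (FixSet T) ≤ √(κ ^ 2 / (κ ^ 2 + c)) * infDist x (FixSet T) := by
  set d := infDist x (FixSet T)
  set D := infDist (T x) (FixSet T)
  have hdecr : D ^ 2 + c * ‖x - T x‖ ^ 2 ≤ d ^ 2 := hT.infDist_sq_add_le hne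
  have hDd : D ^ 2 ≤ d ^ 2 := (le_add_of_nonneg_right (by positivity)).trans hdecr
  have hdκ : d ^ 2 ≤ κ ^ 2 * ‖x - T x‖ ^ 2 := by
    rw [← mul_pow]
    exact pow_le_pow_left₀ infDist_nonneg hreg 2
  have hsq : D ^ 2 ≤ κ ^ 2 / (κ ^ 2 + c) * d ^ 2 := by
    rw [div_mul_eq_mul_div, le_div_iff₀ (by positivity)]
    calc D ^ 2 * (κ ^ 2 + c) = κ ^ 2 * D ^ 2 + c * D ^ 2 := by ring
      _ ≤ κ ^ 2 * D ^ 2 + c * (κ ^ 2 * ‖x - T x‖ ^ 2) := by gcongr; exact hDd.trans hdκ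
      _ = κ ^ 2 * (D ^ 2 + c * ‖x - T x‖ ^ 2) := by ring
      _ ≤ κ ^ 2 * d ^ 2 := by gcongr
  refine le_of_sq_le_sq ?_ (mul_nonneg (Real.sqrt_nonneg _) infDist_nonneg)
  rwa [mul_pow, Real.sq_sqrt (by positivity)]

end StronglyQuasiNE

namespace IsRelocators

variable [NormedAddCommGroup H] {Γ : Set ℝ} {T : ℝ → H → H} {Q : ℝ → ℝ → H → H}
  {L : ℝ → ℝ → ℝ} {γ δ ε : ℝ} {z : H}

theorem apply_mem (hQ : IsRelocators Γ T Q L) (hγ : γ ∈ Γ) (hδ : δ ∈ Γ)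
    (hz : z ∈ FixSet (T γ)) : Q δ γ z ∈ FixSet (T δ) :=
  (hQ.1 γ hγ δ hδ).mapsTo hz

theorem apply_apply (hQ : IsRelocators Γ T Q L) (hγ : γ ∈ Γ) (hδ : δ ∈ Γ) (hε : ε ∈ Γ)
    (hz : z ∈ FixSet (T γ)) : Q ε δ (Q δ γ z) = Q ε γ z :=
  hQ.2.2.1 γ hγ δ hδ ε hε z hz

theorem apply_self (hQ : IsRelocators Γ T Q L) (hγ : γ ∈ Γ) (hz : z ∈ FixSet (T γ)) :
    Q γ γ z = z :=
  (hQ.1 γ hγ γ hγ).injOn (hQ.apply_mem hγ hγ hz) hz (hQ.apply_apply hγ hγ hγ hz)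

theorem one_le (hQ : IsRelocators Γ T Q L) (hγ : γ ∈ Γ) (hδ : δ ∈ Γ) : 1 ≤ L δ γ :=
  (hQ.2.2.2 γ hγ δ hδ).1

theorem dist_le (hQ : IsRelocators Γ T Q L) (hγ : γ ∈ Γ) (hδ : δ ∈ Γ) (x y : H) :
    dist (Q δ γ x) (Q δ γ y) ≤ L δ γ * dist x y := by
  simpa only [dist_eq_norm] using (hQ.2.2.2 γ hγ δ hδ).2 x y

theorem infDist_le (hQ : IsRelocators Γ T Q L) (hγ : γ ∈ Γ) (hδ : δ ∈ Γ)
    (hne : (FixSet (T γ)).Nonempty) (x : H) :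
    infDist (Q δ γ x) (FixSet (T δ)) ≤ L δ γ * infDist x (FixSet (T γ)) := by
  have hL : 0 < L δ γ := zero_lt_one.trans_le (hQ.one_le hγ hδ)
  rw [← div_le_iff₀' hL, le_infDist hne]
  intro y hy
  rw [div_le_iff₀' hL]
  exact (infDist_le_dist_of_mem (hQ.apply_mem hγ hδ hy)).trans (hQ.dist_le hγ hδ x y)

theorem exists_dist_apply_le (hQ : IsRelocators Γ T Q L) (hA : AssumptionA Γ T Q)
    {ι : Type*} {γ : ι → ℝ} {y : ι → H} (hγ : ∀ i, γ i ∈ Γ) (hy : ∀ i, y i ∈ FixSet (T (γ i)))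
    (hγb : IsBounded (range γ)) (hyb : IsBounded (range y)) :
    ∃ K, 0 ≤ K ∧ ∀ δ ∈ Γ, ∀ i, dist (Q δ (γ i) (y i)) (y i) ≤ K * dist δ (γ i) := by
  have hgraph : range (fun i => (y i, γ i)) ⊆ ⋃ γ ∈ Γ, FixSet (T γ) ×ˢ ({γ} : Set ℝ) := by
    rintro _ ⟨i, rfl⟩
    exact mem_biUnion (hγ i) ⟨hy i, rfl⟩
  have hbdd : IsBounded (range fun i => (y i, γ i)) :=
    (hyb.prod hγb).subset <|
      range_subset_iff.2 fun i => ⟨mem_range_self i, mem_range_self i⟩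
  obtain ⟨K, hK, hKQ⟩ := hA _ hgraph hbdd
  refine ⟨K, hK.le, fun δ hδ i => ?_⟩
  simpa only [hQ.apply_self (hγ i) (hy i), dist_eq_norm, Real.norm_eq_abs]
    using hKQ δ hδ _ ⟨i, rfl⟩

theorem mem_fixSet_of_tendsto (hQ : IsRelocators Γ T Q L) (hA : AssumptionA Γ T Q)
    {γ : ℕ → ℝ} {γs : ℝ} {y : ℕ → H} {p : H} (hclosed : IsClosed (FixSet (T γs)))
    (hγ : ∀ n, γ n ∈ Γ) (hγs : γs ∈ Γ) (hy : ∀ n, y n ∈ FixSet (T (γ n)))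
    (hγlim : Tendsto γ atTop (𝓝 γs)) (hylim : Tendsto y atTop (𝓝 p)) : p ∈ FixSet (T γs) := by
  obtain ⟨K, -, hK⟩ := hQ.exists_dist_apply_le hA hγ hy
    (isBounded_range_of_tendsto γ hγlim) (isBounded_range_of_tendsto y hylim)
  have hbound : Tendsto (fun n => K * dist γs (γ n)) atTop (𝓝 0) := by
    simpa only [dist_self, mul_zero] using ((tendsto_const_nhds (x := γs)).dist hγlim).const_mul K
  have hdist : Tendsto (fun n => dist (y n) (Q γs (γ n) (y n))) atTop (𝓝 0) :=
    squeeze_zero (fun _ => dist_nonneg) (fun n => dist_comm (y n) _ ▸ hK γs hγs n) hbound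
  have hlim : Tendsto (fun n => Q γs (γ n) (y n)) atTop (𝓝 p) :=
    (tendsto_iff_of_dist hdist).1 hylim
  exact hclosed.mem_of_tendsto hlim (.of_forall fun n => hQ.apply_mem (hγ n) hγs (hy n))

end IsRelocators

/-- `x` is generated by the relocated fixed-point iteration along the parameters `γ`: apply
`T_{γ n}`, then relocate from `γ n` to `γ (n + 1)`. -/
def IsRelocatedOrbit (T : ℝ → H → H) (Q : ℝ → ℝ → H → H) (γ : ℕ → ℝ) (x : ℕ → H) : Prop :=
  ∀ n, x (n + 1) = Q (γ (n + 1)) (γ n) (T (γ n) (x n))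

namespace IsRelocatedOrbit

variable [NormedAddCommGroup H] {Γ : Set ℝ} {c : ℝ} {T : ℝ → H → H} {Q : ℝ → ℝ → H → H}
  {L : ℝ → ℝ → ℝ} {γ : ℕ → ℝ} {x y z : ℕ → H}

theorem dist_succ_le (hx : IsRelocatedOrbit T Q γ x) (hc : 0 ≤ c)
    (hT : ∀ γ ∈ Γ, StronglyQuasiNE c (T γ)) (hQ : IsRelocators Γ T Q L) (hγ : ∀ n, γ n ∈ Γ)
    {n : ℕ} {p : H} (hp : p ∈ FixSet (T (γ n))) :
    dist (x (n + 1)) (Q (γ (n + 1)) (γ n) p) ≤ L (γ (n + 1)) (γ n) * dist (x n) p := by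
  have hL : 0 ≤ L (γ (n + 1)) (γ n) := zero_le_one.trans (hQ.one_le (hγ n) (hγ (n + 1)))
  rw [hx n]
  exact (hQ.dist_le (hγ n) (hγ (n + 1)) _ _).trans <|
    mul_le_mul_of_nonneg_left ((hT _ (hγ n)).dist_le hc hp) hL

theorem dist_le_exp_tsum_mul (hx : IsRelocatedOrbit T Q γ x) (hc : 0 ≤ c)
    (hT : ∀ γ ∈ Γ, StronglyQuasiNE c (T γ)) (hQ : IsRelocators Γ T Q L) (hγ : ∀ n, γ n ∈ Γ)
    (hsum : Summable fun n => L (γ (n + 1)) (γ n) - 1) (hz : ∀ n, z n ∈ FixSet (T (γ n)))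
    (hzQ : ∀ n, Q (γ (n + 1)) (γ n) (z n) = z (n + 1)) (n : ℕ) :
    dist (x n) (z n) ≤ Real.exp (∑' i, (L (γ (i + 1)) (γ i) - 1)) * dist (x 0) (z 0) := by
  have hstep : ∀ n, dist (x (n + 1)) (z (n + 1)) ≤
      L (γ (n + 1)) (γ n) * (1 * dist (x n) (z n)) := fun n => by
    rw [one_mul, ← hzQ n]
    exact hx.dist_succ_le hc hT hQ hγ (hz n)
  simpa only [one_pow, mul_one] using le_exp_tsum_mul_pow
    (u := fun n => dist (x n) (z n)) zero_le_one dist_nonneg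
    (fun n => hQ.one_le (hγ n) (hγ (n + 1))) hsum hstep n

theorem isBounded_range (hx : IsRelocatedOrbit T Q γ x) (hc : 0 ≤ c)
    (hT : ∀ γ ∈ Γ, StronglyQuasiNE c (T γ)) (hQ : IsRelocators Γ T Q L)
    (hA : AssumptionA Γ T Q) (hγ : ∀ n, γ n ∈ Γ) (hγb : IsBounded (range γ))
    (hsum : Summable fun n => L (γ (n + 1)) (γ n) - 1) {δ : ℝ} (hδ : δ ∈ Γ)
    (hne : (FixSet (T δ)).Nonempty) : IsBounded (range x) := by
  obtain ⟨p, hp⟩ := hne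
  set z : ℕ → H := fun n => Q (γ n) δ p
  have hz : ∀ n, z n ∈ FixSet (T (γ n)) := fun n => hQ.apply_mem hδ (hγ n) hp
  have hzQ : ∀ n, Q (γ (n + 1)) (γ n) (z n) = z (n + 1) :=
    fun n => hQ.apply_apply hδ (hγ n) (hγ (n + 1)) hp
  set M : ℝ := Real.exp (∑' i, (L (γ (i + 1)) (γ i) - 1)) * dist (x 0) (z 0)
  have hxz : ∀ n, dist (x n) (z n) ≤ M := hx.dist_le_exp_tsum_mul hc hT hQ hγ hsum hz hzQ
  obtain ⟨K, hK, hKz⟩ := hQ.exists_dist_apply_le (ι := Unit) (γ := fun _ => δ) (y := fun _ => p)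
    hA (fun _ => hδ) (fun _ => hp) (finite_range _).isBounded (finite_range _).isBounded
  obtain ⟨R, hR⟩ := hγb.subset_closedBall δ
  refine (isBounded_iff_subset_closedBall p).2 ⟨M + K * R, ?_⟩
  rintro _ ⟨n, rfl⟩
  calc dist (x n) p ≤ dist (x n) (z n) + dist (z n) p := dist_triangle ..
    _ ≤ M + K * R := add_le_add (hxz n) <|
      (hKz (γ n) (hγ n) ()).trans (mul_le_mul_of_nonneg_left (hR ⟨n, rfl⟩) hK)

theorem isGeometricallyBounded_infDist (hx : IsRelocatedOrbit T Q γ x) (hc : 0 < c)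
    (hT : ∀ γ ∈ Γ, StronglyQuasiNE c (T γ)) (hQ : IsRelocators Γ T Q L)
    (hreg : UnifBddLinReg Γ T) (hγ : ∀ n, γ n ∈ Γ) (hxb : IsBounded (range x))
    (hsum : Summable fun n => L (γ (n + 1)) (γ n) - 1)
    (hne : ∀ n, (FixSet (T (γ n))).Nonempty) :
    IsGeometricallyBounded fun n => infDist (x n) (FixSet (T (γ n))) := by
  obtain ⟨κ, hκ, hκx⟩ := hreg (range x) (range_nonempty x) hxb
  set ρ : ℝ := √(κ ^ 2 / (κ ^ 2 + c))
  have hρ0 : 0 < ρ := Real.sqrt_pos.2 (by positivity)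
  have hρ1 : ρ < 1 := by
    rw [Real.sqrt_lt' zero_lt_one, one_pow, div_lt_one (by positivity)]
    exact lt_add_of_pos_right _ hc
  have hstep : ∀ n, infDist (x (n + 1)) (FixSet (T (γ (n + 1)))) ≤
      L (γ (n + 1)) (γ n) * (ρ * infDist (x n) (FixSet (T (γ n)))) := fun n => by
    have hL : 0 ≤ L (γ (n + 1)) (γ n) := zero_le_one.trans (hQ.one_le (hγ n) (hγ (n + 1)))
    rw [hx n]
    exact (hQ.infDist_le (hγ n) (hγ (n + 1)) (hne n) _).trans <| mul_le_mul_of_nonneg_left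
      ((hT _ (hγ n)).infDist_le_sqrt_mul hc (hne n) (hκx _ ⟨n, rfl⟩ _ (hγ n))) hL
  exact ⟨_, mul_nonneg (Real.exp_nonneg _) infDist_nonneg, ρ, ⟨hρ0, hρ1⟩,
    le_exp_tsum_mul_pow (u := fun n => infDist (x n) (FixSet (T (γ n)))) hρ0.le infDist_nonneg
      (fun n => hQ.one_le (hγ n) (hγ (n + 1))) hsum hstep⟩

theorem isGeometricallyBounded_dist_succ (hx : IsRelocatedOrbit T Q γ x) (hc : 0 ≤ c)
    (hT : ∀ γ ∈ Γ, StronglyQuasiNE c (T γ)) (hQ : IsRelocators Γ T Q L)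
    (hA : AssumptionA Γ T Q) (hγ : ∀ n, γ n ∈ Γ) {γs : ℝ} (hγlin : RLinearTo γ γs)
    (hsum : Summable fun n => L (γ (n + 1)) (γ n) - 1)
    (hyb : IsBounded (range y)) (hy : ∀ n, y n ∈ FixSet (T (γ n)))
    (hxy : IsGeometricallyBounded fun n => dist (x n) (y n)) :
    IsGeometricallyBounded fun n => dist (x n) (x (n + 1)) := by
  obtain ⟨K, hK, hKy⟩ := hQ.exists_dist_apply_le hA hγ hy
    (isBounded_range_of_tendsto γ hγlin.tendsto) hyb
  obtain ⟨M, hM⟩ := hsum.tendsto_atTop_zero.bddAbove_range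
  have hL : ∀ n, L (γ (n + 1)) (γ n) ≤ M + 1 := fun n => sub_le_iff_le_add.1 (hM ⟨n, rfl⟩)
  have hM1 : 0 ≤ M + 1 := zero_le_one.trans ((hQ.one_le (hγ 0) (hγ 1)).trans (hL 0))
  refine ((hxy.add (hγlin.isGeometricallyBounded_dist_succ.const_mul hK)).add
    (hxy.const_mul hM1)).mono fun n => ?_
  calc dist (x n) (x (n + 1))
      ≤ dist (x n) (y n) + dist (y n) (Q (γ (n + 1)) (γ n) (y n))
          + dist (Q (γ (n + 1)) (γ n) (y n)) (x (n + 1)) := dist_triangle4 ..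
    _ ≤ dist (x n) (y n) + K * dist (γ (n + 1)) (γ n) + (M + 1) * dist (x n) (y n) := by
      gcongr
      · rw [dist_comm]
        exact hKy _ (hγ (n + 1)) n
      · rw [dist_comm]
        exact (hx.dist_succ_le hc hT hQ hγ (hy n)).trans
          (mul_le_mul_of_nonneg_right (hL n) dist_nonneg)

end IsRelocatedOrbit

theorem stmt8_general [NormedAddCommGroup H] [CompleteSpace H]
    {Γ : Set ℝ} {c : ℝ} (hc : 0 < c)
    {T : ℝ → H → H} (hT : ∀ γ ∈ Γ, StronglyQuasiNE c (T γ))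
    {Q : ℝ → ℝ → H → H} {L : ℝ → ℝ → ℝ} (hQ : IsRelocators Γ T Q L)
    (hA : AssumptionA Γ T Q) (hreg : UnifBddLinReg Γ T)
    {γ : ℕ → ℝ} (hγ : ∀ n, γ n ∈ Γ) {γs : ℝ} (hγs : γs ∈ Γ) (hγlin : RLinearTo γ γs)
    (hFix : (FixSet (T γs)).Nonempty)
    (hsum : Summable fun n => L (γ (n + 1)) (γ n) - 1)
    {x : ℕ → H} (hx : IsRelocatedOrbit T Q γ x) :
    ∃ xs ∈ FixSet (T γs), RLinearTo x xs ∧ RLinearTo (fun n => T (γ n) (x n)) xs := by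
  have hne : ∀ n, (FixSet (T (γ n))).Nonempty :=
    fun n => hFix.elim fun z hz => ⟨_, hQ.apply_mem hγs (hγ n) hz⟩
  have hxb : IsBounded (range x) := hx.isBounded_range hc.le hT hQ hA hγ
    (isBounded_range_of_tendsto γ hγlin.tendsto) hsum hγs hFix
  obtain ⟨y, hy, hxy⟩ :=
    (hx.isGeometricallyBounded_infDist hc hT hQ hreg hγ hxb hsum hne).exists_seq_mem hne
  obtain ⟨xs, hxs⟩ := exists_rLinearTo_of_dist_succ <|
    hx.isGeometricallyBounded_dist_succ hc.le hT hQ hA hγ hγlin hsum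
      (hxy.isBounded_range_right hxb) hy hxy
  have hxT : IsGeometricallyBounded fun n => dist (x n) (T (γ n) (x n)) :=
    (hxy.add hxy).mono fun n => (dist_triangle_right _ _ (y n)).trans <|
      add_le_add_right ((hT _ (hγ n)).dist_le hc.le (hy n)) _
  refine ⟨xs, ?_, hxs, hxs.of_dist hxT⟩
  exact hQ.mem_fixSet_of_tendsto hA ((hT γs hγs).isClosed_fixSet hc.le) hγ hγs hy
    hγlin.tendsto (hxs.of_dist hxy).tendsto

/-- under bounded linear regularity, the relocated fixed-point iterates
`(x_n)` and `(T_{γ_n} x_n)` converge `R`-linearly to a common fixed point of `T_{γ*}`. -/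
theorem stmt8 [NormedAddCommGroup H] [InnerProductSpace ℝ H] [CompleteSpace H]
    (Γ : Set ℝ) (hΓne : Γ.Nonempty) (hΓ : Γ ⊆ Set.Ioi (0 : ℝ))
    (α : ℝ) (hα : α ∈ Set.Ioo (0 : ℝ) 1)
    (T : ℝ → H → H) (hTav : ∀ γ ∈ Γ, AveragedNE α (T γ))
    (hFix : ∀ γ ∈ Γ, (FixSet (T γ)).Nonempty)
    (Q : ℝ → ℝ → H → H) (L : ℝ → ℝ → ℝ)
    (hQ : IsRelocators Γ T Q L)
    (hA : AssumptionA Γ T Q)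
    (hcont : ContinuousOn (fun p : H × ℝ => T p.2 p.1) (Set.univ ×ˢ Γ))
    (hreg : UnifBddLinReg Γ T)
    (γseq : ℕ → ℝ) (hγmem : ∀ n, γseq n ∈ Γ)
    (γs : ℝ) (hγs : γs ∈ Γ) (hγlin : RLinearTo γseq γs)
    (hsum : Summable fun n => L (γseq (n + 1)) (γseq n) - 1)
    (x : ℕ → H)
    (hrec : ∀ n : ℕ, x (n + 1) = Q (γseq (n + 1)) (γseq n) (T (γseq n) (x n))) :
    ∃ xs : H, xs ∈ FixSet (T γs) ∧ RLinearTo x xs ∧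
      RLinearTo (fun n => T (γseq n) (x n)) xs := by
  exact stmt8_general (div_pos (sub_pos.2 hα.2) hα.1) (fun γ hγ => (hTav γ hγ).stronglyQuasiNE)
    hQ hA hreg hγmem hγs hγlin (hFix γs hγs) hsum hrec
end

section
/- Let H be a real Hilbert space and Γ ⊆ (0,∞) a nonempty closed interval. Suppose A₁ : H → H is (single-valued) monotone and L-Lipschitz, and A₂ : H ⇉ H is maximally monotone and μ-strongly monotone. Let T_γ := Id − J_{γA₁} + J_{γA₂} ∘ (2J_{γA₁} − Id) denote the Douglas–Rachford operator. Then there exists β ∈ [0,1) such that for every γ ∈ Γ, T_γ is a β-contraction, i.e., ‖T_γx − T_γy‖ ≤ β‖x − y‖ for all x,y ∈ H. -/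
open scoped Pointwise RealInnerProductSpace

variable {H : Type*}

/-- A set-valued operator is monotone. -/
def SVMonotone [NormedAddCommGroup H] [InnerProductSpace ℝ H] (A : H → Set H) : Prop :=
  ∀ ⦃x y u v : H⦄, u ∈ A x → v ∈ A y → 0 ≤ ⟪x - y, u - v⟫

/-- The graph of a set-valued operator. -/
def SVGraph (A : H → Set H) : Set (H × H) := {p | p.2 ∈ A p.1}

/-- A set-valued operator is maximally monotone. -/
def MaxMonotone [NormedAddCommGroup H] [InnerProductSpace ℝ H] (A : H → Set H) : Prop :=
  SVMonotone A ∧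
    ∀ B : H → Set H, SVMonotone B → SVGraph A ⊆ SVGraph B → SVGraph B = SVGraph A

/-- The inverse of a set-valued operator. -/
def SVInv (A : H → Set H) : H → Set H := fun u => {x | u ∈ A x}

/-- `J` is the resolvent `(Id + γA)⁻¹` of the set-valued operator `A`, i.e.
`J x` is a point with `x - J x ∈ γ • A (J x)` for every `x`. -/
def IsResolventOf [NormedAddCommGroup H] [InnerProductSpace ℝ H]
    (A : H → Set H) (γ : ℝ) (J : H → H) : Prop :=
  ∀ x : H, x - J x ∈ γ • A (J x)

/-- A set-valued operator is `μ`-strongly monotone. -/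
def SVStrongMonotone [NormedAddCommGroup H] [InnerProductSpace ℝ H]
    (μ : ℝ) (A : H → Set H) : Prop :=
  ∀ ⦃x y u v : H⦄, u ∈ A x → v ∈ A y → μ * ‖x - y‖ ^ 2 ≤ ⟪x - y, u - v⟫

/-!
Write `d`, `p`, `r` for the differences of two inputs of `T_γ` and of the corresponding values of
`J_{γA₁}` and `J_{γA₂}`, so that `T_γ x - T_γ y = d - p + r`. The decrease
`‖d‖² - ‖d - p + r‖² = ‖p - r‖² + 2⟪p, d - p⟫ + 2⟪r, 2p - d - r⟫` is at least
`‖p - r‖² + 2γμ‖r‖²` by the two monotonicity assumptions. This controls `‖p‖²`, and `‖p‖` controls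
`‖d‖` because `J_{γA₁}` is the inverse of the `(1 + γL)`-Lipschitz map `Id + γA₁`. The resulting
contraction factor depends only on a lower bound for `γμ` and an upper bound for `γL`.
-/

section DouglasRachford

/-- The Douglas–Rachford operator `Id - J₁ + J₂ ∘ (2 J₁ - Id)`, as a function of two arbitrary maps
`J₁` and `J₂` in place of the resolvents. -/
def douglasRachford [AddCommGroup H] [Module ℝ H] (J₁ J₂ : H → H) (x : H) : H :=
  x - J₁ x + J₂ ((2 : ℝ) • J₁ x - x)

/-- The contraction factor of the Douglas–Rachford operator when the second operator, scaled by the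
step size, is `m`-strongly monotone and the first resolvent has a `C`-Lipschitz inverse. -/
noncomputable def douglasRachfordFactor (m C : ℝ) : ℝ :=
  √(1 - 2 * m / ((1 + 2 * m) * C ^ 2))

theorem douglasRachfordFactor_mem_Ico {m C : ℝ} (hm : 0 < m) (hC : 0 < C) :
    douglasRachfordFactor m C ∈ Set.Ico (0 : ℝ) 1 := by
  refine ⟨Real.sqrt_nonneg _, (Real.sqrt_lt' one_pos).2 ?_⟩
  have : 0 < 2 * m / ((1 + 2 * m) * C ^ 2) := by positivity
  linarith

theorem mul_norm_add_sq_le {E : Type*} [SeminormedAddCommGroup E] {c : ℝ} (hc : 0 ≤ c) (x y : E) :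
    c * ‖x + y‖ ^ 2 ≤ (1 + c) * (‖x‖ ^ 2 + c * ‖y‖ ^ 2) :=
  calc c * ‖x + y‖ ^ 2 ≤ c * (‖x‖ + ‖y‖) ^ 2 := by gcongr; exact norm_add_le x y
    _ = (1 + c) * (‖x‖ ^ 2 + c * ‖y‖ ^ 2) - (‖x‖ - c * ‖y‖) ^ 2 := by ring
    _ ≤ (1 + c) * (‖x‖ ^ 2 + c * ‖y‖ ^ 2) := sub_le_self _ (sq_nonneg _)

variable [NormedAddCommGroup H] [InnerProductSpace ℝ H]

theorem norm_sq_sub_norm_sub_add_sq (d p r : H) :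
    ‖d‖ ^ 2 - ‖d - p + r‖ ^ 2 =
      ‖p - r‖ ^ 2 + 2 * ⟪p, d - p⟫ + 2 * ⟪r, (2 : ℝ) • p - d - r⟫ := by
  simp only [← real_inner_self_eq_norm_sq, inner_add_left, inner_add_right, inner_sub_left,
    inner_sub_right, inner_smul_right, real_inner_comm d p, real_inner_comm d r,
    real_inner_comm p r]
  ring

theorem norm_sub_add_le_douglasRachfordFactor_mul {m C : ℝ} (hm : 0 ≤ m) (hC : 1 ≤ C) {d p r : H}
    (hp : 0 ≤ ⟪p, d - p⟫) (hd : ‖d‖ ≤ C * ‖p‖)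
    (hr : m * ‖r‖ ^ 2 ≤ ⟪r, (2 : ℝ) • p - d - r⟫) :
    ‖d - p + r‖ ≤ douglasRachfordFactor m C * ‖d‖ := by
  have decrease : ‖p - r‖ ^ 2 + 2 * m * ‖r‖ ^ 2 ≤ ‖d‖ ^ 2 - ‖d - p + r‖ ^ 2 := by
    rw [norm_sq_sub_norm_sub_add_sq]
    linarith
  have scaled_decrease :
      2 * m * ‖d‖ ^ 2 ≤ (‖d‖ ^ 2 - ‖d - p + r‖ ^ 2) * ((1 + 2 * m) * C ^ 2) :=
    calc 2 * m * ‖d‖ ^ 2 ≤ 2 * m * (C * ‖p‖) ^ 2 := by gcongr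
      _ = C ^ 2 * (2 * m * ‖(p - r) + r‖ ^ 2) := by rw [sub_add_cancel]; ring
      _ ≤ C ^ 2 * ((1 + 2 * m) * (‖p - r‖ ^ 2 + 2 * m * ‖r‖ ^ 2)) := by
        gcongr C ^ 2 * ?_
        exact mul_norm_add_sq_le (by positivity) (p - r) r
      _ ≤ C ^ 2 * ((1 + 2 * m) * (‖d‖ ^ 2 - ‖d - p + r‖ ^ 2)) := by gcongr
      _ = (‖d‖ ^ 2 - ‖d - p + r‖ ^ 2) * ((1 + 2 * m) * C ^ 2) := by ring
  have ratio_le_one : 2 * m / ((1 + 2 * m) * C ^ 2) ≤ 1 :=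
    div_le_one_of_le₀ (by nlinarith [one_le_pow₀ (n := 2) hC]) (by positivity)
  have relative_decrease :
      2 * m / ((1 + 2 * m) * C ^ 2) * ‖d‖ ^ 2 ≤ ‖d‖ ^ 2 - ‖d - p + r‖ ^ 2 := by
    rw [div_mul_eq_mul_div]
    exact (div_le_iff₀ (by positivity)).2 scaled_decrease
  refine le_of_sq_le_sq ?_ (mul_nonneg (Real.sqrt_nonneg _) (norm_nonneg d))
  rw [mul_pow, douglasRachfordFactor, Real.sq_sqrt (by linarith)]
  linarith

theorem norm_douglasRachford_sub_le {m C : ℝ} (hm : 0 ≤ m) (hC : 1 ≤ C) {J₁ J₂ : H → H}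
    (hJ₁ : ∀ x y, 0 ≤ ⟪J₁ x - J₁ y, x - y - (J₁ x - J₁ y)⟫)
    (hJ₁_anti : ∀ x y, ‖x - y‖ ≤ C * ‖J₁ x - J₁ y‖)
    (hJ₂ : ∀ x y, m * ‖J₂ x - J₂ y‖ ^ 2 ≤ ⟪J₂ x - J₂ y, x - y - (J₂ x - J₂ y)⟫) (x y : H) :
    ‖douglasRachford J₁ J₂ x - douglasRachford J₁ J₂ y‖ ≤
      douglasRachfordFactor m C * ‖x - y‖ := by
  have difference : douglasRachford J₁ J₂ x - douglasRachford J₁ J₂ y =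
      x - y - (J₁ x - J₁ y) + (J₂ ((2 : ℝ) • J₁ x - x) - J₂ ((2 : ℝ) • J₁ y - y)) := by
    simp only [douglasRachford]
    abel
  rw [difference]
  refine norm_sub_add_le_douglasRachfordFactor_mul hm hC (hJ₁ x y) (hJ₁_anti x y) ?_
  convert hJ₂ ((2 : ℝ) • J₁ x - x) ((2 : ℝ) • J₁ y - y) using 3
  module

theorem IsResolventOf.mul_norm_sub_sq_le_inner {A : H → Set H} {J : H → H} {γ μ : ℝ}
    (hJ : IsResolventOf A γ J) (hγ : 0 ≤ γ) (hA : SVStrongMonotone μ A) (x y : H) :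
    γ * μ * ‖J x - J y‖ ^ 2 ≤ ⟪J x - J y, x - y - (J x - J y)⟫ := by
  obtain ⟨u, hu, hxu : γ • u = x - J x⟩ := hJ x
  obtain ⟨v, hv, hyv : γ • v = y - J y⟩ := hJ y
  have smul_difference : x - y - (J x - J y) = γ • (u - v) := by
    rw [smul_sub, hxu, hyv]
    abel
  rw [smul_difference, inner_smul_right, mul_assoc]
  exact mul_le_mul_of_nonneg_left (hA hu hv) hγ

theorem norm_sub_le_mul_norm_resolvent_sub {A J : H → H} {γ L : ℝ} (hγ : 0 ≤ γ)
    (hA : ∀ x y, ‖A x - A y‖ ≤ L * ‖x - y‖) (hJ : ∀ x, x - J x = γ • A (J x)) (x y : H) :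
    ‖x - y‖ ≤ (1 + γ * L) * ‖J x - J y‖ := by
  have difference : x - y = J x - J y + γ • (A (J x) - A (J y)) := by
    rw [smul_sub, ← hJ, ← hJ]
    abel
  calc ‖x - y‖ ≤ ‖J x - J y‖ + ‖γ • (A (J x) - A (J y))‖ := difference ▸ norm_add_le _ _
    _ = ‖J x - J y‖ + γ * ‖A (J x) - A (J y)‖ := by rw [norm_smul_of_nonneg hγ]
    _ ≤ ‖J x - J y‖ + γ * (L * ‖J x - J y‖) := by gcongr; exact hA _ _
    _ = (1 + γ * L) * ‖J x - J y‖ := by ring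

theorem inner_resolvent_sub_nonneg {A J : H → H} {γ : ℝ} (hγ : 0 ≤ γ)
    (hA : ∀ x y, 0 ≤ ⟪x - y, A x - A y⟫) (hJ : ∀ x, x - J x = γ • A (J x)) (x y : H) :
    0 ≤ ⟪J x - J y, x - y - (J x - J y)⟫ := by
  rw [sub_sub_sub_comm, hJ, hJ, ← smul_sub, inner_smul_right]
  exact mul_nonneg hγ (hA _ _)

theorem stmt13_general {a b L μ : ℝ} (ha : 0 < a) (hab : a ≤ b) (hL : 0 ≤ L) (hμ : 0 < μ)
    {A₁ : H → H} (hA₁mono : ∀ x y, 0 ≤ ⟪x - y, A₁ x - A₁ y⟫)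
    (hA₁lip : ∀ x y, ‖A₁ x - A₁ y‖ ≤ L * ‖x - y‖)
    {A₂ : H → Set H} (hA₂ : SVStrongMonotone μ A₂) {J₁ J₂ : ℝ → H → H}
    (hJ₁ : ∀ γ ∈ Set.Icc a b, ∀ x, x - J₁ γ x = γ • A₁ (J₁ γ x))
    (hJ₂ : ∀ γ ∈ Set.Icc a b, IsResolventOf A₂ γ (J₂ γ)) :
    ∃ β ∈ Set.Ico (0 : ℝ) 1, ∀ γ ∈ Set.Icc a b, ∀ x y,
      ‖douglasRachford (J₁ γ) (J₂ γ) x - douglasRachford (J₁ γ) (J₂ γ) y‖ ≤ β * ‖x - y‖ := by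
  have hm : 0 < a * μ := mul_pos ha hμ
  have hC : 1 ≤ 1 + b * L := le_add_of_nonneg_right (mul_nonneg (ha.le.trans hab) hL)
  refine ⟨douglasRachfordFactor (a * μ) (1 + b * L),
    douglasRachfordFactor_mem_Ico hm (one_pos.trans_le hC), fun γ hγ => ?_⟩
  have hγ₀ : 0 ≤ γ := ha.le.trans hγ.1
  refine norm_douglasRachford_sub_le hm.le hC
    (inner_resolvent_sub_nonneg hγ₀ hA₁mono (hJ₁ γ hγ)) (fun x y => ?_) (fun x y => ?_)
  · calc ‖x - y‖ ≤ (1 + γ * L) * ‖J₁ γ x - J₁ γ y‖ :=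
          norm_sub_le_mul_norm_resolvent_sub hγ₀ hA₁lip (hJ₁ γ hγ) x y
      _ ≤ (1 + b * L) * ‖J₁ γ x - J₁ γ y‖ := by gcongr; exact hγ.2
  · calc a * μ * ‖J₂ γ x - J₂ γ y‖ ^ 2 ≤ γ * μ * ‖J₂ γ x - J₂ γ y‖ ^ 2 := by gcongr; exact hγ.1
      _ ≤ ⟪J₂ γ x - J₂ γ y, x - y - (J₂ γ x - J₂ γ y)⟫ :=
          (hJ₂ γ hγ).mul_norm_sub_sq_le_inner hγ₀ hA₂ x y

end DouglasRachford

/-- if `A₁` is single-valued, monotone and `L`-Lipschitz and `A₂` is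
maximally monotone and `μ`-strongly monotone, then there is `β ∈ [0,1)` such that the
Douglas–Rachford operator `T_γ` is a `β`-contraction for every `γ` in the closed
interval `Γ = [a,b] ⊆ (0,∞)`. -/
theorem stmt13 [NormedAddCommGroup H] [InnerProductSpace ℝ H] [CompleteSpace H]
    (a b : ℝ) (ha : 0 < a) (hab : a ≤ b)
    (L μ : ℝ) (hL : 0 ≤ L) (hμ : 0 < μ)
    (A₁ : H → H)
    (hA₁mono : ∀ x y : H, 0 ≤ ⟪x - y, A₁ x - A₁ y⟫)
    (hA₁lip : ∀ x y : H, ‖A₁ x - A₁ y‖ ≤ L * ‖x - y‖)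
    (A₂ : H → Set H) (hA₂ : MaxMonotone A₂) (hA₂s : SVStrongMonotone μ A₂)
    (J₁ : ℝ → H → H)
    (hJ₁ : ∀ γ : ℝ, 0 < γ → ∀ x : H, x - J₁ γ x = γ • A₁ (J₁ γ x))
    (J₂ : ℝ → H → H)
    (hJ₂ : ∀ γ : ℝ, 0 < γ → IsResolventOf A₂ γ (J₂ γ))
    (T : ℝ → H → H)
    (hT : ∀ (γ : ℝ) (x : H), T γ x = x - J₁ γ x + J₂ γ ((2 : ℝ) • J₁ γ x - x)) :
    ∃ β : ℝ, β ∈ Set.Ico (0 : ℝ) 1 ∧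
      ∀ γ ∈ Set.Icc a b, ∀ x y : H, ‖T γ x - T γ y‖ ≤ β * ‖x - y‖ := by
  simpa only [hT, douglasRachford] using stmt13_general ha hab hL hμ hA₁mono hA₁lip hA₂s
    (fun γ hγ => hJ₁ γ (ha.trans_le hγ.1)) (fun γ hγ => hJ₂ γ (ha.trans_le hγ.1))
end
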